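/- For all x, y ∈ 𝓡 and all k ∈ ℕ: [x]_k + [y]_k ≤ [x ⊕ y]_k, ι([x ⊕ y]_k) ⪯ x ⊕ y, and x ⊕ y ⪯ ι([x]_k + [y]_k + 2/10^k). -/

import Mathlib

/-- The ambient space `𝓡` of decimal representations: an integer part together
with a sequence of digits in `{0,…,9}`. -/
abbrev DecimalRep := ℤ × (ℕ → Fin 10)

namespace DecimalRep

open scoped Classical

/-- The truncation `[x]_k = x₀ + ∑_{i=1}^k x_i / 10^i` of `x` up to the `k`-th
digit, as a rational number. -/
def trunc (x : DecimalRep) (k : ℕ) : ℚ :=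
  (x.1 : ℚ) + ∑ i ∈ Finset.range k, ((x.2 i : ℕ) : ℚ) / 10 ^ (i + 1)

/-- The order `⪯` on `𝓡`: `x ⪯ y` iff every truncation of `x` is at most the
corresponding truncation of `y`. -/
def le (x y : DecimalRep) : Prop := ∀ k : ℕ, trunc x k ≤ trunc y k

/-- The strict order `≺` on `𝓡`. -/
def lt (x y : DecimalRep) : Prop := le x y ∧ x ≠ y

/-- Two decimal representations are equivalent ("have no gap") iff there is no
third element lying between them. -/
def equiv (x y : DecimalRep) : Prop :=
  ¬ ∃ z : DecimalRep, z ≠ x ∧ z ≠ y ∧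
      ((le x z ∧ le z y) ∨ (le y z ∧ le z x))

/-- `𝓡₉`: decimal representations ending in an infinite string of nines. -/
def allNines (x : DecimalRep) : Prop := ∃ N : ℕ, ∀ k ≥ N, x.2 k = 9

/-- `ℚ_F`: decimal representations ending in an infinite string of zeros. -/
def finiteDec (x : DecimalRep) : Prop := ∃ N : ℕ, ∀ k ≥ N, x.2 k = 0

/-- The decimal expansion map `ι : ℚ → 𝓡`, satisfying
`[ι(α)]_k = ⌊10^k·α⌋/10^k` for all `k`. -/
def iota (α : ℚ) : DecimalRep :=
  (⌊α⌋, fun k => ⟨(⌊α * 10 ^ (k + 1)⌋ % 10).toNat, by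
    have h1 : (0 : ℤ) ≤ ⌊α * 10 ^ (k + 1)⌋ % 10 := Int.emod_nonneg _ (by norm_num)
    have h2 : ⌊α * 10 ^ (k + 1)⌋ % 10 < 10 := Int.emod_lt_of_pos _ (by norm_num)
    omega⟩)

/-- `M` is a least upper bound of `W` in `(𝓡,⪯)`. -/
def IsLub (W : Set DecimalRep) (M : DecimalRep) : Prop :=
  (∀ w ∈ W, le w M) ∧ ∀ M' : DecimalRep, (∀ w ∈ W, le w M') → le M M'

/-- `M` is a greatest lower bound of `W` in `(𝓡,⪯)`. -/
def IsGlb (W : Set DecimalRep) (M : DecimalRep) : Prop :=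
  (∀ w ∈ W, le M w) ∧ ∀ M' : DecimalRep, (∀ w ∈ W, le M' w) → le M' M

/-- The least upper bound of a set in `(𝓡,⪯)` (junk value if none exists). -/
noncomputable def sup (W : Set DecimalRep) : DecimalRep :=
  if h : ∃ M, IsLub W M then h.choose else default

/-- The greatest lower bound of a set in `(𝓡,⪯)` (junk value if none exists). -/
noncomputable def inf (W : Set DecimalRep) : DecimalRep :=
  if h : ∃ M, IsGlb W M then h.choose else default

/-- Addition `x ⊕ y := sup {ι([x]_k + [y]_k) : k ∈ ℕ}` on `𝓡`. -/
noncomputable def add (x y : DecimalRep) : DecimalRep :=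
  sup { z | ∃ k : ℕ, z = iota (trunc x k + trunc y k) }

/-- The "additive inverse" map `Ψ(x₀.x₁x₂⋯) = (−1−x₀).(9−x₁)(9−x₂)⋯`. -/
def psi (x : DecimalRep) : DecimalRep :=
  (-1 - x.1, fun k => ⟨9 - (x.2 k).val, by have := (x.2 k).isLt; omega⟩)

/-- The signal map: `0` on the nonnegative part, `1` on the negative part. -/
noncomputable def sign (x : DecimalRep) : ℕ :=
  if le (iota 0) x then 0 else 1

/-- The absolute value `‖x‖ := max {x, Ψ(x)}` with respect to `⪯`. -/
noncomputable def norm (x : DecimalRep) : DecimalRep :=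
  if le x (psi x) then psi x else x

/-- Multiplication
`x ⊗ y := Ψ^(sign x + sign y) (sup {ι([‖x‖]_k · [‖y‖]_k) : k ∈ ℕ})` on `𝓡`. -/
noncomputable def mul (x y : DecimalRep) : DecimalRep :=
  psi^[sign x + sign y]
    (sup { z | ∃ k : ℕ, z = iota (trunc (norm x) k * trunc (norm y) k) })

/-- The multiplicative inverse
`x⁻¹ := Ψ^(sign x) (inf {ι(1/[‖x‖]_k) : k ∈ ℕ, [‖x‖]_k > 0})`. -/
noncomputable def inv (x : DecimalRep) : DecimalRep :=
  psi^[sign x]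
    (inf { z | ∃ k : ℕ, 0 < trunc (norm x) k ∧ z = iota (1 / trunc (norm x) k) })

/-- A sequence of rationals is Cauchy. -/
def IsCauchy (x : ℕ → ℚ) : Prop :=
  ∀ ε : ℚ, 0 < ε → ∃ N : ℕ, ∀ m n : ℕ, N ≤ m → N ≤ n → |x m - x n| < ε

/-- The upper limit `inf { sup {f k : k ≥ n} : n ∈ ℕ }` of a sequence in `𝓡`. -/
noncomputable def upperLimit (f : ℕ → DecimalRep) : DecimalRep :=
  inf { z | ∃ n : ℕ, z = sup { w | ∃ k : ℕ, n ≤ k ∧ w = f k } }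

/-- The lower limit `sup { inf {f k : k ≥ n} : n ∈ ℕ }` of a sequence in `𝓡`. -/
noncomputable def lowerLimit (f : ℕ → DecimalRep) : DecimalRep :=
  sup { z | ∃ n : ℕ, z = inf { w | ∃ k : ℕ, n ≤ k ∧ w = f k } }

end DecimalRep

/-!
Multiplying truncations by powers of ten turns a decimal representation into an integer sequence
`m` with `m (k + 1) / 10 = m k` (floor division), and every such sequence arises this way.
Floor division by ten is monotone, so it commutes with taking greatest elements: hence pointwise
maxima of such sequences are again of this form and provide least upper bounds.

A rational with `k` decimal places is recovered exactly by `[ι(·)]_k`, so `[x]_k + [y]_k` is the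
`k`-th truncation of an element of the set defining `x ⊕ y`. Since every truncation of `x` is less
than `[x]_k + 1/10ᵏ`, each `[x]_j + [y]_j` is at most `[x]_k + [y]_k + 2/10ᵏ`, whose expansion is
therefore an upper bound of that set.
-/

namespace DecimalRep

section Trunc

variable (x : DecimalRep)

theorem trunc_succ (k : ℕ) : trunc x (k + 1) = trunc x k + (x.2 k).val / 10 ^ (k + 1) := by
  simp only [trunc, Finset.sum_range_succ, add_assoc]

theorem trunc_monotone : Monotone (trunc x) := by
  refine monotone_nat_of_le_succ fun k => ?_
  rw [trunc_succ]
  exact le_add_of_nonneg_right (by positivity)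

theorem trunc_add_one_div_antitone : Antitone fun k => trunc x k + 1 / 10 ^ k := by
  refine antitone_nat_of_succ_le fun k => ?_
  have digit_add_one_le : ((x.2 k).val : ℚ) + 1 ≤ 10 := mod_cast (x.2 k).isLt
  calc trunc x (k + 1) + 1 / 10 ^ (k + 1)
      = trunc x k + ((x.2 k).val + 1) / 10 ^ (k + 1) := by rw [trunc_succ]; ring
    _ ≤ trunc x k + 10 / 10 ^ (k + 1) := by gcongr
    _ = trunc x k + 1 / 10 ^ k := by rw [pow_succ]; field_simp

theorem trunc_lt_trunc_add_one_div (j k : ℕ) : trunc x j < trunc x k + 1 / 10 ^ k :=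
  calc trunc x j ≤ trunc x (max j k) := trunc_monotone x (le_max_left j k)
    _ < trunc x (max j k) + 1 / 10 ^ max j k := lt_add_of_pos_right _ (by positivity)
    _ ≤ trunc x k + 1 / 10 ^ k := trunc_add_one_div_antitone x (le_max_right j k)

theorem trunc_add_trunc_le (y : DecimalRep) (j k : ℕ) :
    trunc x j + trunc y j ≤ trunc x k + trunc y k + 2 / 10 ^ k :=
  calc trunc x j + trunc y j ≤ (trunc x k + 1 / 10 ^ k) + (trunc y k + 1 / 10 ^ k) :=
        add_le_add (trunc_lt_trunc_add_one_div x j k).le (trunc_lt_trunc_add_one_div y j k).le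
    _ = trunc x k + trunc y k + 2 / 10 ^ k := by ring

end Trunc

/-- The integer `10ᵏ · [x]_k`, defined by recursion so that arithmetic on truncations can be done
in `ℤ`. -/
def scaledTrunc (x : DecimalRep) : ℕ → ℤ
  | 0 => x.1
  | k + 1 => 10 * scaledTrunc x k + (x.2 k).val

theorem trunc_eq_scaledTrunc_div (x : DecimalRep) (k : ℕ) :
    trunc x k = scaledTrunc x k / 10 ^ k := by
  induction k with
  | zero => simp [trunc, scaledTrunc]
  | succ k ih =>
    rw [trunc_succ, ih, scaledTrunc, pow_succ]
    push_cast
    field_simp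

theorem scaledTrunc_succ_ediv_ten (x : DecimalRep) (k : ℕ) :
    scaledTrunc x (k + 1) / 10 = scaledTrunc x k := by
  rw [scaledTrunc]
  omega

theorem le_iff_scaledTrunc_le {x y : DecimalRep} :
    le x y ↔ ∀ k, scaledTrunc x k ≤ scaledTrunc y k := by
  refine forall_congr' fun k => ?_
  rw [trunc_eq_scaledTrunc_div, trunc_eq_scaledTrunc_div,
    div_le_div_iff_of_pos_right (by positivity), Int.cast_le]

/-- The inverse construction to `scaledTrunc`: the representation with integer part `m 0` whose
digit of weight `10⁻ᵏ` is the residue of `m k` modulo ten. It is meaningful only if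
`m (k + 1) / 10 = m k`. -/
def ofScaledTrunc (m : ℕ → ℤ) : DecimalRep :=
  (m 0, fun k => ⟨(m (k + 1) % 10).toNat, by lia⟩)

theorem scaledTrunc_ofScaledTrunc {m : ℕ → ℤ} (hm : ∀ k, m (k + 1) / 10 = m k) (k : ℕ) :
    scaledTrunc (ofScaledTrunc m) k = m k := by
  induction k with
  | zero => rfl
  | succ k ih =>
    have quotient := hm k
    rw [scaledTrunc, ih]
    simp only [ofScaledTrunc]
    lia

theorem floor_mul_pow_succ_ediv {K : Type*} [Field K] [LinearOrder K] [IsStrictOrderedRing K]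
    [FloorRing K] {b : ℕ} (hb : b ≠ 0) (α : K) (k : ℕ) :
    ⌊α * b ^ (k + 1)⌋ / (b : ℤ) = ⌊α * b ^ k⌋ := by
  rw [← Int.floor_div_natCast, pow_succ, ← mul_assoc, mul_div_cancel_right₀ _ (mod_cast hb)]

theorem scaledTrunc_iota (α : ℚ) (k : ℕ) : scaledTrunc (iota α) k = ⌊α * 10 ^ k⌋ := by
  have iota_eq : iota α = ofScaledTrunc fun j => ⌊α * 10 ^ j⌋ := by
    simp [iota, ofScaledTrunc]
  rw [iota_eq]
  exact scaledTrunc_ofScaledTrunc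
    (fun j => mod_cast floor_mul_pow_succ_ediv (b := 10) (by norm_num) α j) k

theorem iota_mono {α β : ℚ} (h : α ≤ β) : le (iota α) (iota β) := by
  refine le_iff_scaledTrunc_le.2 fun k => ?_
  rw [scaledTrunc_iota, scaledTrunc_iota]
  gcongr

theorem iota_le_iff {α : ℚ} {x : DecimalRep} :
    le (iota α) x ↔ ∀ k, α < trunc x k + 1 / 10 ^ k := by
  refine le_iff_scaledTrunc_le.trans (forall_congr' fun k => ?_)
  rw [scaledTrunc_iota, Int.floor_le_iff, trunc_eq_scaledTrunc_div, ← add_div,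
    lt_div_iff₀ (by positivity)]

theorem iota_trunc_le (x : DecimalRep) (k : ℕ) : le (iota (trunc x k)) x :=
  iota_le_iff.2 fun j => trunc_lt_trunc_add_one_div x k j

theorem trunc_iota_intCast_div (n : ℤ) (k : ℕ) : trunc (iota (n / 10 ^ k)) k = n / 10 ^ k := by
  rw [trunc_eq_scaledTrunc_div, scaledTrunc_iota, div_mul_cancel₀ _ (by positivity),
    Int.floor_intCast]

theorem trunc_iota_trunc_add_trunc (x y : DecimalRep) (k : ℕ) :
    trunc (iota (trunc x k + trunc y k)) k = trunc x k + trunc y k := by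
  have sum_eq : trunc x k + trunc y k = ((scaledTrunc x k + scaledTrunc y k : ℤ) : ℚ) / 10 ^ k := by
    rw [trunc_eq_scaledTrunc_div, trunc_eq_scaledTrunc_div, Int.cast_add, add_div]
  rw [sum_eq, trunc_iota_intCast_div]

theorem exists_isLub {W : Set DecimalRep} {B : DecimalRep} (hne : W.Nonempty)
    (hB : ∀ w ∈ W, le w B) : ∃ M, IsLub W M := by
  let m (k : ℕ) : ℤ := sSup ((scaledTrunc · k) '' W)
  have isGreatest_m (k : ℕ) : IsGreatest ((scaledTrunc · k) '' W) (m k) := by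
    have bddAbove : BddAbove ((scaledTrunc · k) '' W) :=
      ⟨scaledTrunc B k, Set.forall_mem_image.2 fun w hw => le_iff_scaledTrunc_le.1 (hB w hw) k⟩
    exact ⟨Int.csSup_mem (hne.image _) bddAbove, fun _ => le_csSup bddAbove⟩
  have m_succ_ediv_ten (k : ℕ) : m (k + 1) / 10 = m k := by
    have monotone_ediv_ten : Monotone fun n : ℤ => n / 10 :=
      fun _ _ h => Int.ediv_le_ediv (by norm_num) h
    have isGreatest_ediv := monotone_ediv_ten.map_isGreatest (isGreatest_m (k + 1))
    simp only [Set.image_image, scaledTrunc_succ_ediv_ten] at isGreatest_ediv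
    exact isGreatest_ediv.unique (isGreatest_m k)
  have scaledTrunc_lub (k : ℕ) : scaledTrunc (ofScaledTrunc m) k = m k :=
    scaledTrunc_ofScaledTrunc m_succ_ediv_ten k
  refine ⟨ofScaledTrunc m, fun w hw => le_iff_scaledTrunc_le.2 fun k => ?_,
    fun M' hM' => le_iff_scaledTrunc_le.2 fun k => ?_⟩
  · rw [scaledTrunc_lub]
    exact (isGreatest_m k).2 (Set.mem_image_of_mem _ hw)
  · obtain ⟨w, hw, hwm⟩ := (isGreatest_m k).1
    rw [scaledTrunc_lub, ← hwm]
    exact le_iff_scaledTrunc_le.1 (hM' w hw) k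

theorem isLub_sup {W : Set DecimalRep} {B : DecimalRep} (hne : W.Nonempty)
    (hB : ∀ w ∈ W, le w B) : IsLub W (sup W) := by
  have exists_lub := exists_isLub hne hB
  rw [sup, dif_pos exists_lub]
  exact exists_lub.choose_spec

theorem isLub_add (x y : DecimalRep) :
    IsLub {z | ∃ k : ℕ, z = iota (trunc x k + trunc y k)} (add x y) := by
  refine isLub_sup ⟨_, 0, rfl⟩ (B := iota (trunc x 0 + trunc y 0 + 2 / 10 ^ 0)) ?_
  rintro _ ⟨j, rfl⟩
  exact iota_mono (trunc_add_trunc_le x y j 0)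

end DecimalRep

open DecimalRep in
/-- `[x]_k + [y]_k ≤ [x ⊕ y]_k`, `ι([x ⊕ y]_k) ⪯ x ⊕ y`, and
`x ⊕ y ⪯ ι([x]_k + [y]_k + 2/10^k)`. -/
theorem add_trunc_estimates (x y : DecimalRep) (k : ℕ) :
    trunc x k + trunc y k ≤ trunc (add x y) k ∧
    le (iota (trunc (add x y) k)) (add x y) ∧
    le (add x y) (iota (trunc x k + trunc y k + 2 / 10 ^ k)) := by
  obtain ⟨isUpperBound_add, add_le⟩ := isLub_add x y
  refine ⟨?_, iota_trunc_le _ k, add_le _ ?_⟩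
  · calc trunc x k + trunc y k = trunc (iota (trunc x k + trunc y k)) k :=
          (trunc_iota_trunc_add_trunc x y k).symm
      _ ≤ trunc (add x y) k := isUpperBound_add _ ⟨k, rfl⟩ k
  · rintro _ ⟨j, rfl⟩
    exact iota_mono (trunc_add_trunc_le x y j k)
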